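/- Fix n ≥ 3. On E = (ℝ²)^{ℤ/nℤ}, let A(z) = ½·∑ᵢ ω(zᵢ, zᵢ₊₁) with ω(u,v) = u₁v₂ − u₂v₁, let vᵢ be the vector field whose i-th component at z is zᵢ₊₁ − zᵢ₋₁ and whose other components are 0, and let [X,Y](z) = DY(z)(X(z)) − DX(z)(Y(z)) denote the Lie bracket of vector fields. Let z ∈ E satisfy det(zᵢ₊₁ − zᵢ₋₁, zᵢ₊₂ − zᵢ) ≠ 0 for all i (indices mod n). Then the real linear span of the 2n vectors {vᵢ(z) : i ∈ ℤ/nℤ} ∪ {[vᵢ, vᵢ₊₁](z) : i ∈ ℤ/nℤ} equals the kernel of the linear functional dA_z (the derivative of A at z), which is a hyperplane of dimension 2n − 1 in E. -/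

import Mathlib

/-- The standard area form `det(u,v) = u₁v₂ − u₂v₁` on `ℝ²`. -/
def det2 (u v : ℝ × ℝ) : ℝ := u.1 * v.2 - u.2 * v.1

/-- The algebraic area `A(z) = ½ ∑ᵢ ω(zᵢ, zᵢ₊₁)` of a planar `n`-gon (indices mod `n`). -/
noncomputable def polyArea {n : ℕ} [NeZero n] (z : ZMod n → ℝ × ℝ) : ℝ :=
  (1 / 2) * ∑ i : ZMod n, det2 (z i) (z (i + 1))

/-- The vector field `vᵢ`: its `i`-th component at `z` is `zᵢ₊₁ − zᵢ₋₁`, other components `0`. -/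
noncomputable def vfield {n : ℕ} [NeZero n] (i : ZMod n) (z : ZMod n → ℝ × ℝ) :
    ZMod n → ℝ × ℝ :=
  Pi.single i (z (i + 1) - z (i - 1))

/-- Lie bracket of vector fields on `(ℝ²)^{ℤ/nℤ}`: `[X,Y](z) = DY(z)(X(z)) − DX(z)(Y(z))`. -/
noncomputable def bracket {n : ℕ} [NeZero n]
    (X Y : (ZMod n → ℝ × ℝ) → (ZMod n → ℝ × ℝ)) (z : ZMod n → ℝ × ℝ) :
    ZMod n → ℝ × ℝ :=
  fderiv ℝ Y z (X z) - fderiv ℝ X z (Y z)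

/-!
Write `dᵢ = zᵢ₊₁ − zᵢ₋₁` for the short diagonals. Then `2 dA_z(w) = ∑ ω(wᵢ, dᵢ)`, the vector
`vᵢ(z)` is `dᵢ` placed at `i`, and `[vᵢ, vᵢ₊₁](z)` is, up to sign, `dᵢ` placed at `i + 1` plus
`dᵢ₊₁` placed at `i`. By duality it is enough that a functional `ψ` killing these vectors is a
multiple of `dA_z`. Killing `vᵢ(z)` makes the `i`-th component of `ψ` a multiple `cᵢ ω(·, dᵢ)`,
because the plane is two-dimensional; killing `[vᵢ, vᵢ₊₁](z)` then says `cᵢ = cᵢ₊₁`, so `c` is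
constant around the polygon.
-/

open Module

section CommRing

variable {R M : Type*} [CommRing R] [AddCommGroup M] [Module R M] {ω : M →ₗ[R] M →ₗ[R] R}

section SumPairing

variable {ι : Type*} [Fintype ι]

/-- The functional `w ↦ ∑ᵢ ω(wᵢ, dᵢ)` on families of vectors. For the area form `ω` and the short
diagonals `d` of a polygon it is twice the derivative of the algebraic area. -/
def sumPairing (ω : M →ₗ[R] M →ₗ[R] R) (d : ι → M) : Dual R (ι → M) :=
  ∑ i, ω.flip (d i) ∘ₗ LinearMap.proj i

lemma sumPairing_apply (d w : ι → M) : sumPairing ω d w = ∑ i, ω (w i) (d i) := by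
  simp [sumPairing]

lemma sumPairing_single [DecidableEq ι] (d : ι → M) (i : ι) (u : M) :
    sumPairing ω d (Pi.single i u) = ω u (d i) := by
  rw [sumPairing_apply, Finset.sum_eq_single_of_mem i (Finset.mem_univ i), Pi.single_eq_same]
  intro j _ hji
  simp [Pi.single_eq_of_ne hji]

lemma single_self_mem_ker_sumPairing [DecidableEq ι] (hω : ω.IsAlt) (d : ι → M) (i : ι) :
    Pi.single i (d i) ∈ LinearMap.ker (sumPairing ω d) := by
  rw [LinearMap.mem_ker, sumPairing_single, hω.self_eq_zero]

lemma single_add_single_mem_ker_sumPairing [DecidableEq ι] (hω : ω.IsAlt) (d : ι → M) (i j : ι) :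
    Pi.single j (d i) + Pi.single i (d j) ∈ LinearMap.ker (sumPairing ω d) := by
  rw [LinearMap.mem_ker, map_add, sumPairing_single, sumPairing_single, ← hω.neg, neg_add_cancel]

end SumPairing

section ShortDiagonal

variable {n : ℕ}

/-- The short diagonals `zᵢ₊₁ − zᵢ₋₁` of a closed polygon with vertices in any additive group. -/
def shortDiagonal {G : Type*} [AddGroup G] (z : ZMod n → G) (i : ZMod n) : G :=
  z (i + 1) - z (i - 1)

lemma shortDiagonal_add_one {G : Type*} [AddGroup G] (z : ZMod n → G) (i : ZMod n) :
    shortDiagonal z (i + 1) = z (i + 2) - z i := by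
  rw [shortDiagonal, add_sub_cancel_right, add_assoc, one_add_one_eq_two]

lemma sum_apply_add_one_add_apply_add_one [NeZero n] (hω : ω.IsAlt) (z w : ZMod n → M) :
    ∑ i, (ω (z i) (w (i + 1)) + ω (w i) (z (i + 1))) = sumPairing ω (shortDiagonal z) w := by
  have hshift : ∑ i, ω (z i) (w (i + 1)) = ∑ i, ω (z (i - 1)) (w i) := by
    simpa using Equiv.sum_comp (Equiv.addRight (1 : ZMod n)) fun i => ω (z (i - 1)) (w i)
  rw [Finset.sum_add_distrib, hshift, ← Finset.sum_add_distrib, sumPairing_apply]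
  refine Finset.sum_congr rfl fun i _ => ?_
  rw [shortDiagonal, map_sub, ← hω.neg (w i), neg_add_eq_sub]

end ShortDiagonal

end CommRing

section Field

variable {K V : Type*} [Field K] [AddCommGroup V] [Module K V] {ω : V →ₗ[K] V →ₗ[K] K}

lemma span_pair_eq_top_of_isAlt (hω : ω.IsAlt) (hV : finrank K V = 2) {a b : V}
    (hab : ω a b ≠ 0) : Submodule.span K {a, b} = ⊤ := by
  have hli : LinearIndependent K ![a, b] := by
    refine LinearIndependent.pair_iff.mpr fun s t hst => ⟨?_, ?_⟩
    · have hs : s * ω a b = 0 := by simpa [hω.self_eq_zero] using congrArg (ω · b) hst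
      exact (mul_eq_zero.mp hs).resolve_right hab
    · have ht : t * ω a b = 0 := by simpa [hω.self_eq_zero] using congrArg (ω a) hst
      exact (mul_eq_zero.mp ht).resolve_right hab
  simpa [Matrix.range_cons, Set.pair_comm] using
    hli.span_eq_top_of_card_eq_finrank (by simp [hV])

lemma smul_eq_smul_sub_smul_of_isAlt (hω : ω.IsAlt) (hV : finrank K V = 2) {a b : V}
    (hab : ω a b ≠ 0) (w : V) : ω a b • w = ω w b • a - ω w a • b := by
  obtain ⟨s, t, rfl⟩ : ∃ s t : K, s • a + t • b = w := by
    rw [← Submodule.mem_span_pair, span_pair_eq_top_of_isAlt hω hV hab]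
    trivial
  simp only [map_add, map_smul, LinearMap.add_apply, LinearMap.smul_apply, hω.self_eq_zero,
    smul_eq_mul, ← hω.neg a b]
  module

lemma mul_apply_eq_mul_apply_of_isAlt (hω : ω.IsAlt) (hV : finrank K V = 2) {a b : V}
    (hab : ω a b ≠ 0) {ψ : Dual K V} (hψ : ψ b = 0) (w : V) :
    ω a b * ψ w = ω w b * ψ a := by
  simpa [hψ] using congrArg ψ (smul_eq_smul_sub_smul_of_isAlt hω hV hab w)

lemma finrank_ker_sumPairing {ι : Type*} [Fintype ι] [FiniteDimensional K V] {d : ι → V}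
    {i : ι} {u : V} (hu : ω u (d i) ≠ 0) :
    finrank K (LinearMap.ker (sumPairing ω d)) = Fintype.card ι * finrank K V - 1 := by
  classical
  have hne : sumPairing ω d ≠ 0 := fun h => hu <| by
    rw [← sumPairing_single, h, LinearMap.zero_apply]
  have hker := Dual.finrank_ker_add_one_of_ne_zero hne
  simp only [finrank_pi_fintype, Finset.sum_const, Finset.card_univ, smul_eq_mul] at hker
  exact Nat.eq_sub_of_add_eq hker

section Cyclic

variable {n : ℕ} [NeZero n] {d : ZMod n → V}

theorem exists_eq_smul_sumPairing (hω : ω.IsAlt) (hV : finrank K V = 2)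
    (hd : ∀ i, ω (d i) (d (i + 1)) ≠ 0) {ψ : Dual K (ZMod n → V)}
    (hself : ∀ i, ψ (Pi.single i (d i)) = 0)
    (hadj : ∀ i, ψ (Pi.single (i + 1) (d i) + Pi.single i (d (i + 1))) = 0) :
    ∃ c : K, ψ = c • sumPairing ω d := by
  let ψ' (i : ZMod n) : Dual K V := ψ ∘ₗ LinearMap.single K (fun _ => V) i
  let c (i : ZMod n) : K := -ψ' i (d (i + 1)) / ω (d i) (d (i + 1))
  have component_eq (i : ZMod n) (u : V) : ψ' i u = c i * ω u (d i) := by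
    have hd' : ω (d (i + 1)) (d i) ≠ 0 := by simpa [← hω.neg (d i)] using hd i
    have h := mul_apply_eq_mul_apply_of_isAlt hω hV hd' (ψ := ψ' i) (hself i) u
    rw [← hω.neg (d i)] at h
    simp only [c]
    field_simp [hd i]
    linear_combination -h
  have c_periodic : Function.Periodic c 1 := fun i => by
    have h : ψ' (i + 1) (d i) + ψ' i (d (i + 1)) = 0 := by simpa [ψ'] using hadj i
    rw [component_eq, component_eq, ← hω.neg (d i)] at h
    exact mul_right_cancel₀ (hd i) (by linear_combination h)
  have c_const (i : ZMod n) : c i = c 0 := by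
    obtain ⟨k, rfl⟩ := ZMod.intCast_surjective i
    simpa using c_periodic.int_mul_eq k
  refine ⟨c 0, LinearMap.pi_ext fun i u => ?_⟩
  rw [LinearMap.smul_apply, sumPairing_single, smul_eq_mul, ← c_const i]
  exact component_eq i u

theorem ker_sumPairing_le (hω : ω.IsAlt) (hV : finrank K V = 2)
    (hd : ∀ i, ω (d i) (d (i + 1)) ≠ 0) {W : Submodule K (ZMod n → V)}
    (hself : ∀ i, Pi.single i (d i) ∈ W)
    (hadj : ∀ i, Pi.single (i + 1) (d i) + Pi.single i (d (i + 1)) ∈ W) :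
    LinearMap.ker (sumPairing ω d) ≤ W := by
  intro w hw
  rw [← Subspace.forall_mem_dualAnnihilator_apply_eq_zero_iff]
  intro ψ hψ
  rw [Submodule.mem_dualAnnihilator] at hψ
  obtain ⟨c, rfl⟩ := exists_eq_smul_sumPairing hω hV hd
    (fun i => hψ _ (hself i)) (fun i => hψ _ (hadj i))
  rw [LinearMap.smul_apply, LinearMap.mem_ker.mp hw, smul_zero]

end Cyclic

end Field

lemma hasFDerivAt_sum_apply_add_one {𝕜 V : Type*} [NontriviallyNormedField 𝕜] [CompleteSpace 𝕜]
    [NormedAddCommGroup V] [NormedSpace 𝕜 V] [FiniteDimensional 𝕜 V] {ω : V →ₗ[𝕜] V →ₗ[𝕜] 𝕜}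
    (hω : ω.IsAlt) {n : ℕ} [NeZero n] (z : ZMod n → V) :
    HasFDerivAt (fun z : ZMod n → V => ∑ i, ω (z i) (z (i + 1)))
      (sumPairing ω (shortDiagonal z)).toContinuousLinearMap z := by
  have hterm (i : ZMod n) := ω.toContinuousBilinearMap.hasFDerivAt_of_bilinear
    (hasFDerivAt_apply (𝕜 := 𝕜) i z) (hasFDerivAt_apply (𝕜 := 𝕜) (i + 1) z)
  refine (HasFDerivAt.fun_sum (u := Finset.univ) fun i _ => hterm i).congr_fderiv ?_
  refine ContinuousLinearMap.ext fun w => ?_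
  rw [LinearMap.coe_toContinuousLinearMap', ← sum_apply_add_one_add_apply_add_one hω]
  simp

/-- The area form `det2` as a bilinear map. -/
def detForm : (ℝ × ℝ) →ₗ[ℝ] (ℝ × ℝ) →ₗ[ℝ] ℝ :=
  LinearMap.mk₂ ℝ det2
    (fun _ _ _ => by simp only [det2, Prod.fst_add, Prod.snd_add]; ring)
    (fun _ _ _ => by simp only [det2, Prod.smul_fst, Prod.smul_snd, smul_eq_mul]; ring)
    (fun _ _ _ => by simp only [det2, Prod.fst_add, Prod.snd_add]; ring)
    (fun _ _ _ => by simp only [det2, Prod.smul_fst, Prod.smul_snd, smul_eq_mul]; ring)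

lemma detForm_apply (u v : ℝ × ℝ) : detForm u v = det2 u v := rfl

lemma detForm_isAlt : detForm.IsAlt := fun u => by
  rw [detForm_apply, det2, mul_comm, sub_self]

section Polygon

variable {n : ℕ} [NeZero n]

lemma hasFDerivAt_polyArea (z : ZMod n → ℝ × ℝ) :
    HasFDerivAt polyArea
      ((1 / 2 : ℝ) • (sumPairing detForm (shortDiagonal z)).toContinuousLinearMap) z :=
  (hasFDerivAt_sum_apply_add_one detForm_isAlt z).const_mul (1 / 2)

lemma ker_fderiv_polyArea (z : ZMod n → ℝ × ℝ) :
    LinearMap.ker (fderiv ℝ polyArea z).toLinearMap =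
      LinearMap.ker (sumPairing detForm (shortDiagonal z)) := by
  rw [(hasFDerivAt_polyArea z).fderiv, ContinuousLinearMap.toLinearMap_smul,
    LinearMap.coe_toContinuousLinearMap, LinearMap.ker_smul _ _ (by norm_num)]

lemma vfield_eq_single (i : ZMod n) (z : ZMod n → ℝ × ℝ) :
    vfield i z = Pi.single i (shortDiagonal z i) := rfl

lemma isLinearMap_vfield (i : ZMod n) : IsLinearMap ℝ (vfield i) where
  map_add z w := by
    simp only [vfield, Pi.add_apply, add_sub_add_comm, Pi.single_add]
  map_smul c z := by
    simp only [vfield, Pi.smul_apply, ← smul_sub, Pi.single_smul]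

lemma fderiv_vfield (i : ZMod n) (z w : ZMod n → ℝ × ℝ) :
    fderiv ℝ (vfield i) z w = vfield i w := by
  have h : HasFDerivAt (vfield i) ((isLinearMap_vfield i).mk' _).toContinuousLinearMap z :=
    ((isLinearMap_vfield i).mk' _).toContinuousLinearMap.hasFDerivAt
  rw [h.fderiv]
  rfl

lemma bracket_vfield (i j : ZMod n) (z : ZMod n → ℝ × ℝ) :
    bracket (vfield i) (vfield j) z = vfield j (vfield i z) - vfield i (vfield j z) := by
  rw [bracket, fderiv_vfield, fderiv_vfield]

lemma bracket_vfield_add_one (hn : 3 ≤ n) (i : ZMod n) (z : ZMod n → ℝ × ℝ) :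
    bracket (vfield i) (vfield (i + 1)) z =
      -(Pi.single (i + 1) (shortDiagonal z i) + Pi.single i (shortDiagonal z (i + 1))) := by
  have : Fact (2 < n) := ⟨hn⟩
  have hsucc : i + 1 + 1 ≠ i := fun h => ZMod.neg_one_ne_one (n := n) (by linear_combination -h)
  have hpred : i - 1 ≠ i + 1 := fun h => ZMod.neg_one_ne_one (by linear_combination h)
  rw [bracket_vfield, vfield_eq_single i z, vfield_eq_single (i + 1) z, vfield, vfield,
    add_sub_cancel_right, Pi.single_eq_same, Pi.single_eq_same, Pi.single_eq_of_ne hsucc,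
    Pi.single_eq_of_ne hpred, zero_sub, sub_zero, Pi.single_neg, neg_add']

end Polygon

/-- For `n ≥ 3` and an `n`-gon `z` with
`det(zᵢ₊₁ − zᵢ₋₁, zᵢ₊₂ − zᵢ) ≠ 0` for all `i`, the span of the vectors `vᵢ(z)` together with
the first commutators `[vᵢ,vᵢ₊₁](z)` equals the kernel of `dA_z`, a hyperplane of dimension
`2n − 1`. -/
theorem stmt_10 (n : ℕ) [NeZero n] (hn : 3 ≤ n) (z : ZMod n → ℝ × ℝ)
    (hz : ∀ i, det2 (z (i + 1) - z (i - 1)) (z (i + 2) - z i) ≠ 0) :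
    Submodule.span ℝ
        ((Set.range fun i => vfield i z) ∪
          (Set.range fun i : ZMod n => bracket (vfield i) (vfield (i + 1)) z))
      = LinearMap.ker (fderiv ℝ polyArea z).toLinearMap ∧
    Module.finrank ℝ (LinearMap.ker (fderiv ℝ polyArea z).toLinearMap) = 2 * n - 1 := by
  have hdet (i : ZMod n) : detForm (shortDiagonal z i) (shortDiagonal z (i + 1)) ≠ 0 := by
    rw [shortDiagonal_add_one]
    exact hz i
  have hplane : finrank ℝ (ℝ × ℝ) = 2 := by simp
  rw [ker_fderiv_polyArea]
  simp only [bracket_vfield_add_one hn, vfield_eq_single]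
  refine ⟨le_antisymm (Submodule.span_le.mpr ?_) ?_, ?_⟩
  · rintro _ (⟨i, rfl⟩ | ⟨i, rfl⟩)
    · exact single_self_mem_ker_sumPairing detForm_isAlt _ i
    · exact neg_mem (single_add_single_mem_ker_sumPairing detForm_isAlt _ i (i + 1))
  · exact ker_sumPairing_le detForm_isAlt hplane hdet
      (fun i => Submodule.subset_span (.inl ⟨i, rfl⟩))
      (fun i => neg_mem_iff.mp (Submodule.subset_span (.inr ⟨i, rfl⟩)))
  · rw [finrank_ker_sumPairing (hdet 0), hplane, ZMod.card, mul_comm]
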